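/- arXiv:2212.04305 — 10 statements merged into one kernel-verified Lean document; each statement's English description precedes it below -/
import Mathlib

section
/- Let n ≥ 1, let d ∈ ℝ^n satisfy d ≥ 0 entrywise and d ≠ 0, and let y ∈ ℝ^n. Then for every t ∈ ℝ one has 2 · sup_{c ∈ [0, ∑_i d_i]} ( c·t + th_{d,y}(c) ) = ∑_i y_i + t·(∑_i d_i) + ‖y + t·d‖₁, where ‖·‖₁ is the vector 1-norm. (This identifies the Legendre–Fenchel transform of −th_{d,y}.) -/
open Finset

noncomputable def th {n : ℕ} (d y : Fin n → ℝ) (c : ℝ) : ℝ :=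
  sInf ((fun i => (∑ j, max (y j - y i / d i * d j) 0) + y i / d i * c) ''
    {i : Fin n | 0 < d i})

noncomputable def psum {n : ℕ} (d : Fin n → ℝ) (σ : Equiv.Perm (Fin n)) (j : ℕ) : ℝ :=
  ∑ i ∈ Finset.univ.filter (fun i : Fin n => (i : ℕ) < j), d (σ i)

noncomputable def Emap {n : ℕ} (d y : Fin n → ℝ) (σ : Equiv.Perm (Fin n)) : Fin n → ℝ :=
  fun k => th d y (psum d σ ((σ.symm k : ℕ) + 1)) - th d y (psum d σ (σ.symm k : ℕ))

def dStoch {n : ℕ} (d : Fin n → ℝ) (A : Matrix (Fin n) (Fin n) ℝ) : Prop :=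
  (∀ i j, 0 ≤ A i j) ∧ (∀ j, ∑ i, A i j = 1) ∧ A.mulVec d = d

def Mset {n : ℕ} (d y : Fin n → ℝ) : Set (Fin n → ℝ) :=
  {x | ∃ A : Matrix (Fin n) (Fin n) ℝ, dStoch d A ∧ A.mulVec y = x}

noncomputable def Aentry {n : ℕ} (d : Fin n → ℝ) (σ τ : Equiv.Perm (Fin n))
    (α : ℕ → Fin n) (j k : Fin n) : ℝ :=
  if k = α j.val ∧ (α j.val).val < (α (j.val + 1)).val then
    (psum d τ ((α j.val).val + 1) - psum d σ j.val) / d (τ (α j.val))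
  else if (α j.val).val < k.val ∧ k.val < (α (j.val + 1)).val then 1
  else if (α j.val).val < (α (j.val + 1)).val ∧ k = α (j.val + 1) then
    (psum d σ (j.val + 1) - psum d τ (α (j.val + 1)).val) / d (τ (α (j.val + 1)))
  else if α j.val = α (j.val + 1) ∧ k = α (j.val + 1) then
    d (σ j) / d (τ (α (j.val + 1)))
  else 0

noncomputable def Amat {n : ℕ} (d : Fin n → ℝ) (σ τ : Equiv.Perm (Fin n))
    (α : ℕ → Fin n) : Matrix (Fin n) (Fin n) ℝ :=
  Matrix.of fun p q => Aentry d σ τ α (σ.symm p) (τ.symm q)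

lemma exists_breakpoint {n : ℕ} (d y : Fin n → ℝ) (hd : ∀ i, 0 ≤ d i)
    (hd0 : d ≠ 0) (s c : ℝ) (hc0 : 0 ≤ c) (hcD : c ≤ ∑ i, d i) :
    ∃ i, 0 < d i ∧ (∑ j, max (y j - y i / d i * d j) 0) + y i / d i * c ≤
      (∑ j, max (y j - s * d j) 0) + s * c := by
  classical
  set p : ℝ := ∑ j, (if s * d j < y j then d j else 0) with hp
  have up : ∀ b, s ≤ b → (∀ j, 0 < d j → s * d j < y j → b * d j ≤ y j) →
      (∑ j, max (y j - b * d j) 0) = (∑ j, max (y j - s * d j) 0) - (b - s) * p := by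
    intro b hb h
    rw [hp, Finset.mul_sum, ← Finset.sum_sub_distrib]
    refine Finset.sum_congr rfl fun j _ => ?_
    have hbd := mul_le_mul_of_nonneg_right hb (hd j)
    split_ifs with hj
    · have : b * d j ≤ y j := by
        rcases (hd j).eq_or_lt with h0 | h0
        · rw [← h0] at hj ⊢; linarith
        · exact h j h0 hj
      rw [max_eq_left (by linarith), max_eq_left (by linarith)]; ring
    · rw [max_eq_right (by linarith), max_eq_right (by linarith)]; ring
  have down : ∀ a, a ≤ s → (∀ j, 0 < d j → y j ≤ s * d j → y j ≤ a * d j) →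
      (∑ j, max (y j - a * d j) 0) = (∑ j, max (y j - s * d j) 0) - (a - s) * p := by
    intro a ha h
    rw [hp, Finset.mul_sum, ← Finset.sum_sub_distrib]
    refine Finset.sum_congr rfl fun j _ => ?_
    have hbd := mul_le_mul_of_nonneg_right ha (hd j)
    split_ifs with hj
    · rw [max_eq_left (by linarith), max_eq_left (by linarith)]; ring
    · have : y j ≤ a * d j := by
        rcases (hd j).eq_or_lt with h0 | h0
        · rw [← h0] at hj ⊢; linarith
        · exact h j h0 (not_lt.mp hj)
      rw [max_eq_right (by linarith), max_eq_right (by linarith)]; ring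
  obtain ⟨k, hk⟩ : ∃ k, 0 < d k := by
    by_contra! h
    exact hd0 (funext fun i => le_antisymm (h i) (hd i))
  set B := Finset.univ.filter (fun i => 0 < d i ∧ s * d i < y i) with hB
  set A := Finset.univ.filter (fun i => 0 < d i ∧ y i ≤ s * d i) with hA
  have useB : B.Nonempty → c ≤ p → ∃ i, 0 < d i ∧
      (∑ j, max (y j - y i / d i * d j) 0) + y i / d i * c ≤
      (∑ j, max (y j - s * d j) 0) + s * c := by
    intro hne hcp
    obtain ⟨i, hi, hmin⟩ := Finset.exists_min_image B (fun i => y i / d i) hne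
    simp only [hB, Finset.mem_filter, Finset.mem_univ, true_and] at hi hmin
    have hs : s ≤ y i / d i := (le_div_iff₀ hi.1).2 hi.2.le
    refine ⟨i, hi.1, ?_⟩
    rw [up _ hs fun j h1 h2 => (le_div_iff₀ h1).1 (hmin j ⟨h1, h2⟩)]
    nlinarith
  have useA : A.Nonempty → p ≤ c → ∃ i, 0 < d i ∧
      (∑ j, max (y j - y i / d i * d j) 0) + y i / d i * c ≤
      (∑ j, max (y j - s * d j) 0) + s * c := by
    intro hne hcp
    obtain ⟨i, hi, hmax⟩ := Finset.exists_max_image A (fun i => y i / d i) hne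
    simp only [hA, Finset.mem_filter, Finset.mem_univ, true_and] at hi hmax
    have hs : y i / d i ≤ s := (div_le_iff₀ hi.1).2 hi.2
    refine ⟨i, hi.1, ?_⟩
    rw [down _ hs fun j h1 h2 => (div_le_iff₀ h1).1 (hmax j ⟨h1, h2⟩)]
    nlinarith
  rcases B.eq_empty_or_nonempty with hBe | hBn
  · have hno : ∀ j, 0 < d j → y j ≤ s * d j := by
      intro j hj
      by_contra! h
      have : j ∈ B := by simp [hB, hj, h]
      simp [hBe] at this
    refine useA ⟨k, by simp [hA, hk, hno k hk]⟩ (le_trans (le_of_eq ?_) hc0)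
    refine Finset.sum_eq_zero fun j _ => ?_
    split_ifs with hj
    · rcases (hd j).eq_or_lt with h0 | h0
      · exact h0.symm
      · linarith [hno j h0]
    · rfl
  · rcases A.eq_empty_or_nonempty with hAe | hAn
    · have hno : ∀ j, 0 < d j → s * d j < y j := by
        intro j hj
        by_contra! h
        have : j ∈ A := by simp [hA, hj, h]
        simp [hAe] at this
      refine useB hBn (hcD.trans (le_of_eq ?_))
      refine Finset.sum_congr rfl fun j _ => ?_
      split_ifs with hj
      · rfl
      · rcases (hd j).eq_or_lt with h0 | h0
        · exact h0.symm
        · exact absurd (hno j h0) hj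
    · rcases le_total c p with h | h
      · exact useB hBn h
      · exact useA hAn h

/-- Legendre–Fenchel transform of the negative thermomajorization curve. -/
theorem stmt0 (n : ℕ) (hn : 1 ≤ n) (d y : Fin n → ℝ) (hd : ∀ i, 0 ≤ d i)
    (hd0 : d ≠ 0) (t : ℝ) :
    2 * sSup ((fun c => c * t + th d y c) '' Set.Icc (0 : ℝ) (∑ i, d i)) =
      (∑ i, y i) + t * (∑ i, d i) + ∑ i, |y i + t * d i| := by
  classical
  obtain ⟨k, hk⟩ : ∃ k, 0 < d k := by
    by_contra! h
    exact hd0 (funext fun i => le_antisymm (h i) (hd i))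
  have hle : ∀ c ∈ Set.Icc (0 : ℝ) (∑ i, d i),
      c * t + th d y c ≤ ∑ j, max (y j - (-t) * d j) 0 := by
    intro c hc
    obtain ⟨i, hi, h⟩ := exists_breakpoint d y hd hd0 (-t) c hc.1 hc.2
    have : th d y c ≤ (∑ j, max (y j - y i / d i * d j) 0) + y i / d i * c :=
      csInf_le ((Set.toFinite _).image _).bddBelow ⟨i, hi, rfl⟩
    linarith
  have hsup : sSup ((fun c => c * t + th d y c) '' Set.Icc (0 : ℝ) (∑ i, d i)) =
      ∑ j, max (y j - (-t) * d j) 0 := by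
    apply le_antisymm
    · refine csSup_le ⟨_, 0, ⟨le_rfl, Finset.sum_nonneg fun i _ => hd i⟩, rfl⟩ ?_
      rintro _ ⟨c, hc, rfl⟩
      exact hle c hc
    · set c : ℝ := ∑ j, (if (-t) * d j < y j then d j else 0) with hcdef
      have hc : c ∈ Set.Icc (0 : ℝ) (∑ i, d i) := by
        constructor
        · exact Finset.sum_nonneg fun j _ => by split_ifs <;> simp [hd j]
        · exact Finset.sum_le_sum fun j _ => by split_ifs <;> simp [hd j]
      have hb : BddAbove ((fun c => c * t + th d y c) '' Set.Icc (0 : ℝ) (∑ i, d i)) := by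
        refine ⟨∑ j, max (y j - (-t) * d j) 0, ?_⟩
        rintro _ ⟨c, hc, rfl⟩
        exact hle c hc
      refine le_trans ?_ (le_csSup hb ⟨c, hc, rfl⟩)
      have : (∑ j, max (y j - (-t) * d j) 0) - c * t ≤ th d y c := by
        refine le_csInf ⟨_, k, hk, rfl⟩ ?_
        rintro _ ⟨i, hi, rfl⟩
        simp only
        generalize y i / d i = s
        have h : (∑ j, max (y j - (-t) * d j) 0) - (s + t) * c ≤
            ∑ j, max (y j - s * d j) 0 := by
          rw [hcdef, Finset.mul_sum, ← Finset.sum_sub_distrib]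
          refine Finset.sum_le_sum fun j _ => ?_
          split_ifs with hj
          · rw [max_eq_left (a := y j - -t * d j) (by linarith)]
            refine le_trans (le_of_eq ?_) (le_max_left _ _)
            ring
          · rw [max_eq_right (a := y j - -t * d j) (by linarith)]
            refine le_trans (le_of_eq ?_) (le_max_right _ _)
            ring
        linarith
      simp only
      linarith
  rw [hsup, Finset.mul_sum, Finset.mul_sum, ← Finset.sum_add_distrib, ← Finset.sum_add_distrib]
  refine Finset.sum_congr rfl fun j _ => ?_
  rcases le_total 0 (y j + t * d j) with h | h
  · rw [abs_of_nonneg h, max_eq_left (by linarith)]; ring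
  · rw [abs_of_nonpos h, max_eq_right (by linarith)]; ring
end

section
/- Let n ≥ 1, let d ∈ ℝ^n satisfy d ≥ 0 entrywise and d ≠ 0, and let x, y ∈ ℝ^n with ∑_i x_i = ∑_i y_i. Then th_{d,x}(c) ≤ th_{d,y}(c) for all c ∈ [0, ∑_i d_i] if and only if ‖x − t·d‖₁ ≤ ‖y − t·d‖₁ for all t ∈ ℝ, where ‖·‖₁ is the vector 1-norm. -/
open Finset

/-- The function whose breakpoints enter the definition of `th`. -/
noncomputable def fpos {n : ℕ} (d y : Fin n → ℝ) (t : ℝ) : ℝ := ∑ j, max (y j - t * d j) 0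

/-- A subgradient of `fpos` at `t`, up to sign. -/
noncomputable def csub {n : ℕ} (d y : Fin n → ℝ) (t : ℝ) : ℝ :=
  ∑ j, if t * d j < y j then d j else 0

lemma csub_nonneg {n : ℕ} {d : Fin n → ℝ} (hd : ∀ i, 0 ≤ d i) (y : Fin n → ℝ) (t : ℝ) :
    0 ≤ csub d y t :=
  Finset.sum_nonneg fun j _ => by split_ifs <;> simp [hd j]

lemma csub_le {n : ℕ} {d : Fin n → ℝ} (hd : ∀ i, 0 ≤ d i) (y : Fin n → ℝ) (t : ℝ) :
    csub d y t ≤ ∑ i, d i :=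
  Finset.sum_le_sum fun j _ => by split_ifs <;> simp [hd j]

lemma fpos_sub {n : ℕ} (d y : Fin n → ℝ) (t s : ℝ) :
    fpos d y t + t * csub d y t ≤ fpos d y s + s * csub d y t := by
  unfold fpos csub
  rw [Finset.mul_sum, Finset.mul_sum, ← Finset.sum_add_distrib, ← Finset.sum_add_distrib]
  refine Finset.sum_le_sum fun j _ => ?_
  split_ifs with h
  · rw [max_eq_left (by linarith)]
    linarith [le_max_left (y j - s * d j) 0]
  · rw [max_eq_right (by linarith)]
    linarith [le_max_right (y j - s * d j) 0]

lemma fpos_move {n : ℕ} (d y : Fin n → ℝ) (t s : ℝ)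
    (h1 : ∀ j, t * d j < y j → s * d j ≤ y j) (h2 : ∀ j, y j ≤ t * d j → y j ≤ s * d j) :
    fpos d y s ≤ fpos d y t + (t - s) * csub d y t := by
  unfold fpos csub
  rw [Finset.mul_sum, ← Finset.sum_add_distrib]
  refine Finset.sum_le_sum fun j _ => ?_
  split_ifs with h
  · rw [max_eq_left (by linarith [h1 j h]), max_eq_left (by linarith)]
    linarith
  · rw [max_eq_right (by linarith [h2 j (not_lt.1 h)]), max_eq_right (by linarith)]
    linarith

lemma th_le_break {n : ℕ} (d y : Fin n → ℝ) (c : ℝ) (i : Fin n) (hi : 0 < d i) :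
    th d y c ≤ fpos d y (y i / d i) + y i / d i * c :=
  csInf_le ((Set.toFinite _).image _).bddBelow ⟨i, hi, rfl⟩

lemma exists_left {n : ℕ} {d : Fin n → ℝ} (hd : ∀ i, 0 ≤ d i) (y : Fin n → ℝ) (t : ℝ)
    (c : ℝ) (hc : csub d y t ≤ c) (i₀ : Fin n) (hi₀ : 0 < d i₀) (hi₀' : y i₀ ≤ t * d i₀) :
    th d y c ≤ fpos d y t + t * c := by
  obtain ⟨i, hi, hmax⟩ := Finset.exists_max_image
    (Finset.univ.filter fun i => 0 < d i ∧ y i ≤ t * d i) (fun i => y i / d i)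
    ⟨i₀, by simp [hi₀, hi₀']⟩
  simp only [Finset.mem_filter, Finset.mem_univ, true_and] at hi hmax
  have hit : y i / d i ≤ t := (div_le_iff₀ hi.1).2 hi.2
  have := fpos_move d y t (y i / d i)
    (fun j hj => le_trans (mul_le_mul_of_nonneg_right hit (hd j)) hj.le)
    (fun j hj => by
      rcases (hd j).eq_or_lt with h | h
      · simpa [← h] using hj
      · exact (div_le_iff₀ h).1 (hmax j ⟨h, hj⟩))
  have h3 := th_le_break d y c i hi.1
  nlinarith [mul_nonneg (sub_nonneg.2 hit) (sub_nonneg.2 hc)]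

lemma exists_right {n : ℕ} {d : Fin n → ℝ} (hd : ∀ i, 0 ≤ d i) (y : Fin n → ℝ) (t : ℝ)
    (c : ℝ) (hc : c ≤ csub d y t) (i₀ : Fin n) (hi₀ : 0 < d i₀) (hi₀' : t * d i₀ < y i₀) :
    th d y c ≤ fpos d y t + t * c := by
  obtain ⟨i, hi, hmin⟩ := Finset.exists_min_image
    (Finset.univ.filter fun i => 0 < d i ∧ t * d i < y i) (fun i => y i / d i)
    ⟨i₀, by simp [hi₀, hi₀']⟩
  simp only [Finset.mem_filter, Finset.mem_univ, true_and] at hi hmin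
  have hit : t ≤ y i / d i := (le_div_iff₀ hi.1).2 hi.2.le
  have := fpos_move d y t (y i / d i)
    (fun j hj => by
      rcases (hd j).eq_or_lt with h | h
      · simpa [← h] using (show t * d j ≤ y j from hj.le)
      · exact (le_div_iff₀ h).1 (hmin j ⟨h, hj⟩))
    (fun j hj => le_trans hj (mul_le_mul_of_nonneg_right hit (hd j)))
  have h3 := th_le_break d y c i hi.1
  nlinarith [mul_nonneg (sub_nonneg.2 hit) (sub_nonneg.2 hc)]

lemma th_le {n : ℕ} {d : Fin n → ℝ} (hd : ∀ i, 0 ≤ d i) (hne : ∃ i, 0 < d i)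
    (y : Fin n → ℝ) (t c : ℝ) (hc0 : 0 ≤ c) (hc1 : c ≤ ∑ i, d i) :
    th d y c ≤ fpos d y t + t * c := by
  obtain ⟨k, hk⟩ := hne
  by_cases hL : ∃ i, 0 < d i ∧ y i ≤ t * d i
  · obtain ⟨i, hi, hi'⟩ := hL
    by_cases hR : ∃ i, 0 < d i ∧ t * d i < y i
    · obtain ⟨r, hr, hr'⟩ := hR
      rcases le_total (csub d y t) c with h | h
      · exact exists_left hd y t c h i hi hi'
      · exact exists_right hd y t c h r hr hr'
    · push Not at hR
      refine exists_left hd y t c (le_trans (le_of_eq ?_) hc0) i hi hi'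
      refine Finset.sum_eq_zero fun j _ => ?_
      split_ifs with h
      · exact ((hd j).eq_or_lt.resolve_right fun h' => (hR j h').not_gt h).symm
      · rfl
  · push Not at hL
    refine exists_right hd y t c (le_trans hc1 (le_of_eq ?_)) k hk (hL k hk)
    refine Finset.sum_congr rfl fun j _ => ?_
    split_ifs with h
    · rfl
    · exact ((hd j).eq_or_lt.resolve_right fun h' => h (hL j h')).symm

lemma le_th {n : ℕ} {d : Fin n → ℝ} (hne : ∃ i, 0 < d i) (y : Fin n → ℝ) (c a : ℝ)
    (h : ∀ s, a ≤ fpos d y s + s * c) : a ≤ th d y c := by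
  obtain ⟨k, hk⟩ := hne
  refine le_csInf ⟨_, k, hk, rfl⟩ ?_
  rintro _ ⟨i, _, rfl⟩
  exact h _

lemma norm_eq {n : ℕ} (d y : Fin n → ℝ) (t : ℝ) :
    ∑ i, |y i - t * d i| = 2 * fpos d y t - ∑ i, y i + t * ∑ i, d i := by
  unfold fpos
  rw [Finset.mul_sum, Finset.mul_sum, ← Finset.sum_sub_distrib, ← Finset.sum_add_distrib]
  refine Finset.sum_congr rfl fun j _ => ?_
  rcases le_total (y j - t * d j) 0 with h | h
  · rw [abs_of_nonpos h, max_eq_right h]; ring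
  · rw [abs_of_nonneg h, max_eq_left h]; ring

/-- Thermomajorization-curve domination is equivalent to the 1-norm condition. -/
theorem stmt1 (n : ℕ) (hn : 1 ≤ n) (d : Fin n → ℝ) (hd : ∀ i, 0 ≤ d i)
    (hd0 : d ≠ 0) (x y : Fin n → ℝ) (hsum : ∑ i, x i = ∑ i, y i) :
    (∀ c ∈ Set.Icc (0 : ℝ) (∑ i, d i), th d x c ≤ th d y c) ↔
      ∀ t : ℝ, ∑ i, |x i - t * d i| ≤ ∑ i, |y i - t * d i| := by
  have hne : ∃ i, 0 < d i := by
    by_contra hcon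
    push Not at hcon
    exact hd0 (funext fun i => le_antisymm (hcon i) (hd i))
  constructor
  · intro h t
    rw [norm_eq, norm_eq, hsum]
    have h1 := csub_nonneg hd x t
    have h2 := csub_le hd x t
    have h3 := h _ ⟨h1, h2⟩
    have h4 := le_th hne x (csub d x t) _ (fpos_sub d x t)
    have h5 := th_le hd hne y t _ h1 h2
    linarith
  · intro h c hc
    refine le_th hne y c _ fun s => ?_
    have h1 := th_le hd hne x s c hc.1 hc.2
    have h2 := h s
    rw [norm_eq, norm_eq, hsum] at h2
    linarith
end

section
/- Let n ≥ 1, d ∈ ℝ^n with d > 0 entrywise, y ∈ ℝ^n, and σ ∈ S_n. Then E_{d,y}(σ) = y if and only if y_{σ(1)}/d_{σ(1)} ≥ y_{σ(2)}/d_{σ(2)} ≥ … ≥ y_{σ(n)}/d_{σ(n)}. -/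
open Finset

theorem key4 {n : ℕ} (hn : 1 ≤ n) (d : Fin n → ℝ) (hd : ∀ i, 0 < d i)
    (y : Fin n → ℝ) (σ : Equiv.Perm (Fin n)) (j : ℕ) :
    th d y (psum d σ j) = psum y σ j ↔
      ∃ i, ∀ k : Fin n, ((k : ℕ) < j → y i / d i ≤ y (σ k) / d (σ k)) ∧
        (j ≤ (k : ℕ) → y (σ k) / d (σ k) ≤ y i / d i) := by
  have hset : {i : Fin n | 0 < d i} = Set.univ := by
    ext i; simp [hd i]
  set f : Fin n → ℝ := fun i =>
    (∑ j, max (y j - y i / d i * d j) 0) + y i / d i * psum d σ j with hf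
  have hth : th d y (psum d σ j) = sInf (Set.range f) := by
    unfold th; rw [hset, Set.image_univ]
  have hne : (Set.range f).Nonempty := ⟨f ⟨0, hn⟩, Set.mem_range_self _⟩
  have hfin : (Set.range f).Finite := Set.finite_range f
  let g : Fin n → Fin n → ℝ := fun i k => max (y (σ k) - y i / d i * d (σ k)) 0 -
    (if (k : ℕ) < j then y (σ k) - y i / d i * d (σ k) else 0)
  have hg0 : ∀ i k, 0 ≤ g i k := by
    intro i k
    simp only [g]
    split_ifs
    · exact sub_nonneg.2 (le_max_left _ _)
    · simp
  have hfg : ∀ i, f i - psum y σ j = ∑ k, g i k := by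
    intro i
    simp only [g, f, psum, Finset.sum_sub_distrib, ← Finset.sum_filter, ← Finset.mul_sum]
    have : ∑ k, max (y k - y i / d i * d k) 0 = ∑ k, max (y (σ k) - y i / d i * d (σ k)) 0 :=
      (Equiv.sum_comp σ (fun k => max (y k - y i / d i * d k) 0)).symm
    rw [this]; ring
  have hge : ∀ i, psum y σ j ≤ f i := by
    intro i
    have := Finset.sum_nonneg (fun k (_ : k ∈ Finset.univ) => hg0 i k)
    have := hfg i
    linarith
  have heq : ∀ i, f i = psum y σ j ↔ ∀ k : Fin n,
      ((k : ℕ) < j → y i / d i ≤ y (σ k) / d (σ k)) ∧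
        (j ≤ (k : ℕ) → y (σ k) / d (σ k) ≤ y i / d i) := by
    intro i
    rw [← sub_eq_zero, hfg, Finset.sum_eq_zero_iff_of_nonneg (fun k _ => hg0 i k)]
    simp only [Finset.mem_univ, true_implies]
    refine forall_congr' fun k => ?_
    rw [le_div_iff₀ (hd (σ k)), div_le_iff₀ (hd (σ k))]
    simp only [g]
    split_ifs with h
    · rw [sub_eq_zero, max_eq_left_iff]
      simp [h, not_le.2 h]
    · rw [sub_zero, max_eq_right_iff]
      simp [h, not_lt.1 h]
  constructor
  · intro h
    obtain ⟨i, hi⟩ := hne.csInf_mem hfin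
    exact ⟨i, (heq i).1 (by rw [hi, ← hth, h])⟩
  · rintro ⟨i, hi⟩
    rw [hth]
    apply le_antisymm
    · rw [← (heq i).2 hi]
      exact csInf_le hfin.bddBelow (Set.mem_range_self i)
    · apply le_csInf hne
      rintro _ ⟨i, rfl⟩
      exact hge i

theorem psum_succ4 {n : ℕ} (y : Fin n → ℝ) (σ : Equiv.Perm (Fin n)) (j : Fin n) :
    psum y σ ((j : ℕ) + 1) = psum y σ j + y (σ j) := by
  unfold psum
  have : Finset.univ.filter (fun i : Fin n => (i : ℕ) < (j : ℕ) + 1) =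
      insert j (Finset.univ.filter (fun i : Fin n => (i : ℕ) < (j : ℕ))) := by
    ext i
    simp [Fin.ext_iff]
    omega
  rw [this, Finset.sum_insert (by simp), add_comm]

/-- E_{d,y}(σ) = y iff σ sorts y/d non-increasingly. -/
theorem stmt4 (n : ℕ) (hn : 1 ≤ n) (d : Fin n → ℝ) (hd : ∀ i, 0 < d i)
    (y : Fin n → ℝ) (σ : Equiv.Perm (Fin n)) :
    Emap d y σ = y ↔ Antitone (fun j : Fin n => y (σ j) / d (σ j)) := by
  constructor
  · intro h
    have hstep : ∀ j : Fin n, th d y (psum d σ ((j : ℕ) + 1)) - th d y (psum d σ j) = y (σ j) := by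
      intro j
      have := congrFun h (σ j)
      simpa [Emap] using this
    have hall : ∀ j : ℕ, j ≤ n → th d y (psum d σ j) = psum y σ j := by
      intro j
      induction j with
      | zero =>
        intro _
        rw [key4 hn d hd]
        have : Nonempty (Fin n) := ⟨⟨0, hn⟩⟩
        obtain ⟨i, hi⟩ := Finite.exists_max (fun i => y i / d i)
        exact ⟨i, fun k => ⟨fun h => absurd h (Nat.not_lt_zero _), fun _ => hi _⟩⟩
      | succ j ih =>
        intro hj
        have h1 := hstep ⟨j, hj⟩
        have h2 := psum_succ4 y σ ⟨j, hj⟩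
        have h3 := ih (by omega)
        simp only at h1 h2
        linarith
    intro a b hab
    rcases hab.eq_or_lt with rfl | hlt
    · exact le_rfl
    obtain ⟨i, hi⟩ := (key4 hn d hd y σ b).1 (hall b b.2.le)
    exact ((hi b).2 le_rfl).trans ((hi a).1 hlt)
  · intro h
    have hall : ∀ j : ℕ, j ≤ n → th d y (psum d σ j) = psum y σ j := by
      intro j hj
      rw [key4 hn d hd]
      refine ⟨σ ⟨j - 1, by omega⟩, fun k => ⟨fun hk => h ?_, fun hk => h ?_⟩⟩
      · rw [Fin.le_def]; simp only; omega
      · rw [Fin.le_def]; simp only; omega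
    funext k
    have h2 := psum_succ4 y σ (σ.symm k)
    unfold Emap
    rw [hall _ (σ.symm k).2, hall _ (σ.symm k).2.le, h2]
    simp
end

section
/- Let n ≥ 1, d ∈ ℝ^n with d > 0 entrywise, and σ, τ ∈ S_n. Then the matrix A_{στ} is an extreme point of the convex set s_d(n) of d-stochastic matrices (in particular A_{στ} is itself d-stochastic). -/
open Finset

lemma psum_zero' {n : ℕ} (d : Fin n → ℝ) (σ : Equiv.Perm (Fin n)) : psum d σ 0 = 0 := by
  simp [psum]

lemma psum_top {n : ℕ} (d : Fin n → ℝ) (σ : Equiv.Perm (Fin n)) :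
    psum d σ n = ∑ i, d i := by
  unfold psum
  rw [Finset.filter_true_of_mem (fun i _ => i.isLt)]
  exact Equiv.sum_comp σ d

lemma psum_step {n : ℕ} (d : Fin n → ℝ) (σ : Equiv.Perm (Fin n)) (j : Fin n) :
    psum d σ (j.val + 1) = psum d σ j.val + d (σ j) := by
  unfold psum
  have : Finset.univ.filter (fun i : Fin n => (i : ℕ) < j.val + 1)
      = insert j (Finset.univ.filter (fun i : Fin n => (i : ℕ) < j.val)) := by
    ext i
    simp only [Finset.mem_filter, Finset.mem_univ, true_and, Finset.mem_insert, Fin.ext_iff]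
    omega
  rw [this, Finset.sum_insert (by simp), add_comm]

lemma psum_mono {n : ℕ} (d : Fin n → ℝ) (hd : ∀ i, 0 < d i) (σ : Equiv.Perm (Fin n))
    {a b : ℕ} (h : a ≤ b) : psum d σ a ≤ psum d σ b := by
  unfold psum
  apply Finset.sum_le_sum_of_subset_of_nonneg
  · intro i
    simp only [Finset.mem_filter, Finset.mem_univ, true_and]
    omega
  · intro i _ _
    exact (hd _).le

/-- second difference of `min` along two grids -/
noncomputable def overlap (S T : ℕ → ℝ) (j k : ℕ) : ℝ :=
  (min (S (j + 1)) (T (k + 1)) - min (S j) (T (k + 1))) -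
    (min (S (j + 1)) (T k) - min (S j) (T k))

lemma overlap_nonneg (S T : ℕ → ℝ) (j k : ℕ) (hS : S j ≤ S (j + 1)) (hT : T k ≤ T (k + 1)) :
    0 ≤ overlap S T j k := by
  unfold overlap
  simp only [min_def]
  split_ifs <;> linarith

lemma overlap_zero (S T : ℕ → ℝ) (j k : ℕ) (hS : S j ≤ S (j + 1)) (hT : T k ≤ T (k + 1))
    (h : S (j + 1) ≤ T k ∨ T (k + 1) ≤ S j) : overlap S T j k = 0 := by
  unfold overlap
  rcases h with h | h <;> simp only [min_def] <;> split_ifs <;> linarith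

lemma sum_fin_diff {n : ℕ} (f : ℕ → ℝ) : ∑ i : Fin n, (f (i.val + 1) - f i.val) = f n - f 0 := by
  rw [Fin.sum_univ_eq_sum_range (fun i => f (i + 1) - f i) n, Finset.sum_range_sub]

lemma overlap_row {n : ℕ} (S T : ℕ → ℝ) (j : ℕ) (h0 : T 0 ≤ S j) (hS : S j ≤ S (j + 1))
    (hn : S (j + 1) ≤ T n) : ∑ k : Fin n, overlap S T j k.val = S (j + 1) - S j := by
  have := sum_fin_diff (n := n) (fun k => min (S (j + 1)) (T k) - min (S j) (T k))
  simp only [overlap]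
  rw [this, min_eq_left hn, min_eq_left (hS.trans hn), min_eq_right h0,
    min_eq_right (h0.trans hS)]
  ring

lemma overlap_col {n : ℕ} (S T : ℕ → ℝ) (k : ℕ) (h0 : S 0 ≤ T k) (hT : T k ≤ T (k + 1))
    (hn : T (k + 1) ≤ S n) : ∑ j : Fin n, overlap S T j.val k = T (k + 1) - T k := by
  have := sum_fin_diff (n := n) (fun j => min (S j) (T (k + 1)) - min (S j) (T k))
  have h2 : ∀ j : Fin n, overlap S T j.val k =
      (min (S (j.val + 1)) (T (k + 1)) - min (S (j.val + 1)) (T k)) -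
      (min (S j.val) (T (k + 1)) - min (S j.val) (T k)) := by
    intro j
    unfold overlap
    ring
  simp only [h2]
  rw [this, min_eq_right hn, min_eq_right (hT.trans hn), min_eq_left h0,
    min_eq_left (h0.trans hT)]
  ring

/-- A matrix with vanishing marginals which vanishes off the staircase is zero. -/
lemma stair_zero {n : ℕ} (S T : ℕ → ℝ) (hS : Monotone S) (hT : Monotone T)
    (c : Fin n → Fin n → ℝ) (hr : ∀ j, ∑ k, c j k = 0) (hc : ∀ k, ∑ j, c j k = 0)
    (hz : ∀ j k : Fin n, S (j.val + 1) ≤ T k.val ∨ T (k.val + 1) ≤ S j.val → c j k = 0)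
    (j k : Fin n) : c j k = 0 := by
  let e : ℕ → ℕ → ℝ := fun i l => if h : i < n ∧ l < n then c ⟨i, h.1⟩ ⟨l, h.2⟩ else 0
  have he : ∀ i l : Fin n, e i.val l.val = c i l := by
    intro i l
    simp [e]
  have hez : ∀ i l : ℕ, S (i + 1) ≤ T l ∨ T (l + 1) ≤ S i → e i l = 0 := by
    intro i l h
    by_cases h' : i < n ∧ l < n
    · simp only [e, dif_pos h']
      exact hz ⟨i, h'.1⟩ ⟨l, h'.2⟩ h
    · simp only [e, dif_neg h']
  have her : ∀ i < n, ∑ l ∈ Finset.range n, e i l = 0 := by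
    intro i hi
    rw [← Fin.sum_univ_eq_sum_range (fun l => e i l) n, ← hr ⟨i, hi⟩]
    exact Finset.sum_congr rfl (fun l _ => he ⟨i, hi⟩ l)
  have hec : ∀ l < n, ∑ i ∈ Finset.range n, e i l = 0 := by
    intro l hl
    rw [← Fin.sum_univ_eq_sum_range (fun i => e i l) n, ← hc ⟨l, hl⟩]
    exact Finset.sum_congr rfl (fun i _ => he i ⟨l, hl⟩)
  have hR : ∀ a ≤ n, ∀ b ≤ n, ∑ i ∈ Finset.range a, ∑ l ∈ Finset.range b, e i l = 0 := by
    intro a ha b hb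
    rcases le_total (S a) (T b) with h | h
    · apply Finset.sum_eq_zero
      intro i hi
      have hi := Finset.mem_range.1 hi
      rw [← her i (by omega)]
      apply Finset.sum_subset (Finset.range_mono hb)
      intro l _ hl
      have hl : b ≤ l := by simpa using hl
      exact hez i l (Or.inl ((hS (by omega : i + 1 ≤ a)).trans (h.trans (hT hl))))
    · rw [Finset.sum_comm]
      apply Finset.sum_eq_zero
      intro l hl
      have hl := Finset.mem_range.1 hl
      rw [← hec l (by omega)]
      apply Finset.sum_subset (Finset.range_mono ha)
      intro i _ hi
      have hi : a ≤ i := by simpa using hi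
      exact hez i l (Or.inr ((hT (by omega : l + 1 ≤ b)).trans (h.trans (hS hi))))
  have h1 := hR (j.val + 1) j.isLt (k.val + 1) k.isLt
  have h2 := hR (j.val + 1) j.isLt k.val k.isLt.le
  have h3 := hR j.val j.isLt.le (k.val + 1) k.isLt
  have h4 := hR j.val j.isLt.le k.val k.isLt.le
  rw [Finset.sum_range_succ, h3, Finset.sum_range_succ] at h1
  rw [Finset.sum_range_succ, h4] at h2
  rw [← he]
  linarith

lemma Aentry_overlap {n : ℕ} (d : Fin n → ℝ) (hd : ∀ i, 0 < d i)
    (σ τ : Equiv.Perm (Fin n)) (α : ℕ → Fin n)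
    (hα : ∀ j : ℕ, j ≤ n →
      psum d τ (α j).val ≤ psum d σ j ∧ psum d σ j ≤ psum d τ ((α j).val + 1))
    (j k : Fin n) :
    Aentry d σ τ α j k * d (τ k) = overlap (psum d σ) (psum d τ) j.val k.val := by
  obtain ⟨h1, h2⟩ := hα j.val j.isLt.le
  obtain ⟨h3, h4⟩ := hα (j.val + 1) j.isLt
  have hs := psum_step d σ j
  have hp := hd (σ j)
  have hpk := hd (τ k)
  have ht := psum_step d τ k
  have mono : ∀ {a b : ℕ}, a ≤ b → psum d τ a ≤ psum d τ b := fun h => psum_mono d hd τ h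
  have hle : (α j.val).val ≤ (α (j.val + 1)).val := by
    by_contra hcon
    have := mono (by omega : (α (j.val + 1)).val + 1 ≤ (α j.val).val)
    linarith
  unfold Aentry
  split_ifs with c1 c2 c3 c4
  · obtain ⟨rfl, c⟩ := c1
    rw [div_mul_cancel₀ _ hpk.ne']
    have := mono (by omega : (α j.val).val + 1 ≤ (α (j.val + 1)).val)
    unfold overlap
    rw [min_eq_right (by linarith), min_eq_left (by linarith), min_eq_right (by linarith),
      min_eq_right (by linarith)]
    ring
  · have e1 := mono (by omega : (α j.val).val + 1 ≤ k.val)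
    have e2 := mono (by omega : k.val + 1 ≤ (α (j.val + 1)).val)
    unfold overlap
    rw [min_eq_right (by linarith), min_eq_left (by linarith), min_eq_right (by linarith),
      min_eq_left (by linarith)]
    linarith
  · obtain ⟨c, hk⟩ := c3
    rw [← hk] at h3 h4 c ⊢
    rw [div_mul_cancel₀ _ hpk.ne']
    have := mono (by omega : (α j.val).val + 1 ≤ k.val)
    unfold overlap
    rw [min_eq_left (by linarith), min_eq_left (by linarith), min_eq_right (by linarith),
      min_eq_left (by linarith)]
    ring
  · obtain ⟨c, hk⟩ := c4
    rw [c] at h1 h2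
    rw [← hk] at h1 h2 h3 h4 ⊢
    rw [div_mul_cancel₀ _ hpk.ne']
    unfold overlap
    rw [min_eq_left (by linarith), min_eq_left (by linarith), min_eq_right (by linarith),
      min_eq_right (by linarith)]
    linarith
  · rw [zero_mul, overlap_zero _ _ _ _ (by linarith) (by linarith)]
    simp only [Fin.ext_iff] at c1 c3 c4
    have : k.val < (α j.val).val ∨ (α (j.val + 1)).val < k.val := by omega
    rcases this with h | h
    · right
      exact (mono (by omega : k.val + 1 ≤ (α j.val).val)).trans h1
    · left
      exact h4.trans (mono (by omega : (α (j.val + 1)).val + 1 ≤ k.val))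

/-- The β-permutation matrix A_{στ} is an extreme point of the set of
d-stochastic matrices. Here α : ℕ → Fin n is the (0-indexed version of the)
index sequence from the definition of A_{στ}. -/
theorem stmt5 (n : ℕ) (hn : 1 ≤ n) (d : Fin n → ℝ) (hd : ∀ i, 0 < d i)
    (σ τ : Equiv.Perm (Fin n)) (α : ℕ → Fin n)
    (hα0 : (α 0).val = 0) (hαn : (α n).val = n - 1)
    (hα : ∀ j : ℕ, 1 ≤ j → j ≤ n - 1 →
      psum d τ (α j).val < psum d σ j ∧ psum d σ j ≤ psum d τ ((α j).val + 1)) :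
    Amat d σ τ α ∈
      Set.extremePoints ℝ {A : Matrix (Fin n) (Fin n) ℝ | dStoch d A} := by
  have hα' : ∀ j : ℕ, j ≤ n →
      psum d τ (α j).val ≤ psum d σ j ∧ psum d σ j ≤ psum d τ ((α j).val + 1) := by
    intro j hj
    rcases Nat.eq_zero_or_pos j with rfl | h0
    · rw [hα0, psum_zero', psum_zero']
      exact ⟨le_rfl, by rw [← psum_zero' d τ]; exact psum_mono d hd τ (by omega)⟩
    · rcases Nat.lt_or_ge j n with h1 | h1
      · obtain ⟨a, b⟩ := hα j h0 (by omega)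
        exact ⟨a.le, b⟩
      · obtain rfl : j = n := by omega
        rw [hαn, Nat.sub_add_cancel hn, psum_top, ← psum_top d τ]
        exact ⟨psum_mono d hd τ (by omega), le_rfl⟩
  have key := Aentry_overlap d hd σ τ α hα'
  have mS : Monotone (psum d σ) := fun _ _ h => psum_mono d hd σ h
  have mT : Monotone (psum d τ) := fun _ _ h => psum_mono d hd τ h
  have hcol : ∀ k : Fin n, ∑ j : Fin n, Aentry d σ τ α j k = 1 := by
    intro k
    have h := overlap_col (n := n) (psum d σ) (psum d τ) k.val
      (by rw [psum_zero', ← psum_zero' d τ]; exact mT (by omega)) (mT (by omega))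
      (by rw [psum_top, ← psum_top d τ]; exact mT k.isLt)
    simp only [← key] at h
    rw [← Finset.sum_mul, psum_step] at h
    have hk := (hd (τ k)).ne'
    apply mul_right_cancel₀ hk
    linarith
  have hrow : ∀ j : Fin n, ∑ k : Fin n, Aentry d σ τ α j k * d (τ k) = d (σ j) := by
    intro j
    have h := overlap_row (n := n) (psum d σ) (psum d τ) j.val
      (by rw [psum_zero', ← psum_zero' d σ]; exact mS (by omega)) (mS (by omega))
      (by rw [psum_top, ← psum_top d σ]; exact mS j.isLt)
    simp only [← key] at h
    rw [h, psum_step]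
    ring
  have hnn : ∀ j k : Fin n, 0 ≤ Aentry d σ τ α j k := by
    intro j k
    have h := overlap_nonneg (psum d σ) (psum d τ) j.val k.val (mS (by omega)) (mT (by omega))
    rw [← key] at h
    exact nonneg_of_mul_nonneg_left h (hd _)
  have hA : dStoch d (Amat d σ τ α) := by
    refine ⟨fun i j => hnn _ _, fun j => ?_, ?_⟩
    · exact (Equiv.sum_comp σ.symm (fun i => Aentry d σ τ α i (τ.symm j))).trans (hcol _)
    · funext i
      have h := hrow (σ.symm i)
      rw [← Equiv.sum_comp τ.symm] at h
      simpa [Amat, Matrix.mulVec, dotProduct] using h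
  rw [mem_extremePoints_iff_left]
  refine ⟨hA, ?_⟩
  rintro B hB C hC ⟨s, t, hs, ht, hst, hBC⟩
  obtain ⟨B0, B1, B2⟩ := hB
  obtain ⟨C0, C1, C2⟩ := hC
  obtain ⟨A0, A1, A2⟩ := hA
  have hz := stair_zero (psum d σ) (psum d τ) mS mT
    (fun j k => (B (σ j) (τ k) - Amat d σ τ α (σ j) (τ k)) * d (τ k)) ?_ ?_ ?_
  · ext p q
    have h := hz (σ.symm p) (τ.symm q)
    simp only [Equiv.apply_symm_apply] at h
    have := (mul_eq_zero.1 h).resolve_right (hd _).ne'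
    linarith
  · intro j
    have e1 := congrFun B2 (σ j)
    have e2 := congrFun A2 (σ j)
    simp only [Matrix.mulVec, dotProduct] at e1 e2
    rw [Equiv.sum_comp τ (fun k => (B (σ j) k - Amat d σ τ α (σ j) k) * d k)]
    simp only [sub_mul]
    rw [Finset.sum_sub_distrib, e1, e2, sub_self]
  · intro k
    rw [← Finset.sum_mul,
      Equiv.sum_comp σ (fun j => (B j (τ k) - Amat d σ τ α j (τ k))),
      Finset.sum_sub_distrib, B1, A1, sub_self, zero_mul]
  · intro j k h
    have h0 := overlap_zero _ _ _ _ (mS (by omega)) (mT (by omega)) h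
    rw [← key] at h0
    have h1 := (mul_eq_zero.1 h0).resolve_right (hd _).ne'
    have h2 : Amat d σ τ α (σ j) (τ k) = 0 := by simpa [Amat] using h1
    have h3 := congrFun (congrFun hBC (σ j)) (τ k)
    simp only [Matrix.add_apply, Matrix.smul_apply, smul_eq_mul, h2] at h3
    have h4 := mul_nonneg ht.le (C0 (σ j) (τ k))
    have h5 := mul_nonneg hs.le (B0 (σ j) (τ k))
    have h6 : s * B (σ j) (τ k) = 0 := by linarith
    have h7 := (mul_eq_zero.1 h6).resolve_left hs.ne'
    simp only [h2, h7, sub_self, zero_mul]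
end

section
/- Let n ≥ 1 and d ∈ ℝ^n with d > 0 entrywise. The following are equivalent: (i) d is stable, i.e., the map I ↦ ∑_{i∈I} d_i on subsets I ⊆ {1,…,n} is injective; (ii) for all x, y ∈ ℝ^n, if x ≺_d y and y ≺_d x then x = y (i.e., thermomajorization ≺_d is antisymmetric and hence a partial order). -/
open Finset

lemma fmono {n : ℕ} (d x y : Fin n → ℝ) (h : x ∈ Mset d y) (t : ℝ) :
    ∑ j, max (x j - t * d j) 0 ≤ ∑ j, max (y j - t * d j) 0 := by
  obtain ⟨A, ⟨h0, h1, h2⟩, rfl⟩ := h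
  calc ∑ i, max (A.mulVec y i - t * d i) 0
      ≤ ∑ i, ∑ j, A i j * max (y j - t * d j) 0 := by
        refine Finset.sum_le_sum fun i _ => max_le ?_ ?_
        · have e : t * d i = ∑ j, A i j * (t * d j) := by
            conv_lhs => rw [← h2]
            simp only [Matrix.mulVec, dotProduct, Finset.mul_sum]
            exact Finset.sum_congr rfl fun j _ => by ring
          rw [e]
          simp only [Matrix.mulVec, dotProduct]
          rw [← Finset.sum_sub_distrib]
          refine Finset.sum_le_sum fun j _ => ?_
          rw [← mul_sub]
          exact mul_le_mul_of_nonneg_left (le_max_left _ _) (h0 i j)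
        · exact Finset.sum_nonneg fun j _ => mul_nonneg (h0 i j) (le_max_right _ _)
    _ = ∑ j, max (y j - t * d j) 0 := by
        rw [Finset.sum_comm]
        refine Finset.sum_congr rfl fun j _ => ?_
        rw [← Finset.sum_mul, h1, one_mul]

lemma ev_step {n : ℕ} (d y : Fin n → ℝ) (t : ℝ) :
    ∀ᶠ e in nhdsWithin (0 : ℝ) (Set.Ioi 0), ∀ j, t * d j < y j → (t + e) * d j ≤ y j := by
  rw [Filter.eventually_all]
  intro j
  by_cases h : t * d j < y j
  · have hc : ContinuousAt (fun e : ℝ => (t + e) * d j) 0 := by fun_prop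
    have : ∀ᶠ e in nhds (0 : ℝ), (t + e) * d j < y j :=
      hc.eventually_lt continuousAt_const (by simpa using h)
    filter_upwards [nhdsWithin_le_nhds this] with e he _ using he.le
  · exact Filter.Eventually.of_forall fun e he => absurd he h

lemma fdiff {n : ℕ} (d y : Fin n → ℝ) (hd : ∀ i, 0 < d i) (t e : ℝ) (he : 0 < e)
    (h : ∀ j, t * d j < y j → (t + e) * d j ≤ y j) :
    ∑ j, max (y j - t * d j) 0 - ∑ j, max (y j - (t + e) * d j) 0
      = e * ∑ j ∈ univ.filter (fun j => t * d j < y j), d j := by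
  rw [← Finset.sum_sub_distrib, Finset.mul_sum, Finset.sum_filter]
  refine Finset.sum_congr rfl fun j _ => ?_
  have hp := mul_pos he (hd j)
  split_ifs with hj
  · have := h j hj
    rw [max_eq_left (by linarith), max_eq_left (by linarith)]; ring
  · rw [max_eq_right (by linarith), max_eq_right (by linarith)]; ring

lemma swap_mem {n : ℕ} (d : Fin n → ℝ) (hd : ∀ i, 0 < d i) (I J : Finset (Fin n))
    (hIJ : ∑ i ∈ I, d i = ∑ i ∈ J, d i) (hS : ∑ i ∈ I, d i ≠ 0)
    (hS' : ∑ i ∈ Iᶜ, d i ≠ 0) :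
    (fun i => if i ∈ I then d i else 0) ∈ Mset d (fun i => if i ∈ J then d i else 0) := by
  have hc : ∑ i ∈ Iᶜ, d i = ∑ i ∈ Jᶜ, d i := by
    have h1 := Finset.sum_add_sum_compl I d
    have h2 := Finset.sum_add_sum_compl J d
    linarith
  have hs0 : 0 ≤ ∑ i ∈ I, d i := Finset.sum_nonneg fun i _ => (hd i).le
  have hs0' : 0 ≤ ∑ i ∈ Iᶜ, d i := Finset.sum_nonneg fun i _ => (hd i).le
  set S := ∑ i ∈ I, d i with hSd
  set S' := ∑ i ∈ Iᶜ, d i with hSd'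
  let A : Matrix (Fin n) (Fin n) ℝ := fun i j =>
    if j ∈ J then (if i ∈ I then d i / S else 0) else (if i ∈ I then 0 else d i / S')
  refine ⟨A, ⟨?_, ?_, ?_⟩, ?_⟩
  · intro i j
    have := (hd i).le
    simp only [A]
    split_ifs <;> positivity
  · intro j
    by_cases hj : j ∈ J
    · simp only [A, hj, if_true]
      rw [Finset.sum_ite_mem, Finset.univ_inter, ← Finset.sum_div, ← hSd, div_self hS]
    · simp only [A, hj, if_false]
      have : ∀ i, (if i ∈ I then 0 else d i / S') = if i ∈ Iᶜ then d i / S' else 0 := by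
        intro i; by_cases hi : i ∈ I <;> simp [hi]
      simp only [this]
      rw [Finset.sum_ite_mem, Finset.univ_inter, ← Finset.sum_div, ← hSd', div_self hS']
  · ext i
    simp only [Matrix.mulVec, dotProduct]
    rw [← Finset.sum_add_sum_compl J]
    by_cases hi : i ∈ I
    · have e1 : ∑ j ∈ J, A i j * d j = d i / S * S := by
        rw [hIJ, Finset.mul_sum]
        exact Finset.sum_congr rfl fun j hj => by simp [A, hj, hi, hIJ]
      have e2 : ∑ j ∈ Jᶜ, A i j * d j = 0 :=
        Finset.sum_eq_zero fun j hj => by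
          have := Finset.mem_compl.1 hj
          simp [A, this, hi]
      rw [e1, e2, div_mul_cancel₀ _ hS, add_zero]
    · have e1 : ∑ j ∈ Jᶜ, A i j * d j = d i / S' * S' := by
        rw [hc, Finset.mul_sum]
        exact Finset.sum_congr rfl fun j hj => by
          have := Finset.mem_compl.1 hj
          simp [A, this, hi, hc]
      have e2 : ∑ j ∈ J, A i j * d j = 0 :=
        Finset.sum_eq_zero fun j hj => by simp [A, hj, hi]
      rw [e1, e2, div_mul_cancel₀ _ hS', zero_add]
  · ext i
    simp only [Matrix.mulVec, dotProduct, mul_ite, mul_zero]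
    rw [Finset.sum_ite_mem, Finset.univ_inter]
    split_ifs with hi
    · have e1 : ∑ j ∈ J, A i j * d j = d i / S * S := by
        rw [hIJ, Finset.mul_sum]
        exact Finset.sum_congr rfl fun j hj => by simp [A, hj, hi, hIJ]
      rw [e1, div_mul_cancel₀ _ hS]
    · exact Finset.sum_eq_zero fun j hj => by simp [A, hj, hi]

/-- d is stable iff thermomajorization ≺_d is antisymmetric (a partial order). -/
theorem stmt9 (n : ℕ) (hn : 1 ≤ n) (d : Fin n → ℝ) (hd : ∀ i, 0 < d i) :
    (Function.Injective fun I : Finset (Fin n) => ∑ i ∈ I, d i) ↔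
      ∀ x y : Fin n → ℝ, x ∈ Mset d y → y ∈ Mset d x → x = y := by
  constructor
  · intro hinj x y hxy hyx
    have hf := fun t => le_antisymm (fmono d x y hxy t) (fmono d y x hyx t)
    have key : ∀ t i, t * d i < x i ↔ t * d i < y i := by
      intro t
      obtain ⟨e, ⟨h1, h2⟩, he⟩ :=
        (((ev_step d x t).and (ev_step d y t)).and self_mem_nhdsWithin).exists
      have he : 0 < e := he
      have a := fdiff d x hd t e he h1
      have b := fdiff d y hd t e he h2
      rw [hf, hf, b] at a
      have := hinj (mul_left_cancel₀ he.ne' a)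
      intro i
      have := Finset.ext_iff.1 this i
      simpa using this.symm
    ext i
    have h1 := key (x i / d i) i
    have h2 := key (y i / d i) i
    rw [div_mul_cancel₀ _ (hd i).ne'] at h1 h2
    exact le_antisymm (not_lt.1 fun h => lt_irrefl _ (h2.1 h))
      (not_lt.1 fun h => lt_irrefl _ (h1.2 h))
  · intro h I J hIJ
    have hIJ : ∑ i ∈ I, d i = ∑ i ∈ J, d i := hIJ
    have hz : ∀ K : Finset (Fin n), ∑ i ∈ K, d i = 0 → K = ∅ := by
      intro K hK
      by_contra hne
      exact (Finset.sum_pos (fun i _ => hd i) (Finset.nonempty_iff_ne_empty.2 hne)).ne' hK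
    have hc : ∑ i ∈ Iᶜ, d i = ∑ i ∈ Jᶜ, d i := by
      have h1 := Finset.sum_add_sum_compl I d
      have h2 := Finset.sum_add_sum_compl J d
      linarith
    by_cases hS : ∑ i ∈ I, d i = 0
    · rw [hz I hS, hz J (hIJ ▸ hS)]
    by_cases hS' : ∑ i ∈ Iᶜ, d i = 0
    · have h1 := hz _ hS'
      have h2 := hz _ (hc ▸ hS')
      exact compl_injective (h1.trans h2.symm)
    have := h _ _ (swap_mem d hd I J hIJ hS hS')
      (swap_mem d hd J I hIJ.symm (hIJ ▸ hS) (hc ▸ hS'))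
    ext i
    have hi := congrFun this i
    have := (hd i).ne'
    by_cases a : i ∈ I <;> by_cases b : i ∈ J <;> simp_all
end

section
/- Let n ≥ 1, d ∈ ℝ^n with d > 0 entrywise, and y ∈ ℝ^n. If there exists x ∈ M_d(y) with x ≠ y (i.e., M_d(y) is not the singleton {y}), then the affine dimension of the convex polytope M_d(y) equals n − 1; that is, the ℝ-vector span of { u − v : u, v ∈ M_d(y) } has dimension n − 1. -/
open Finset

lemma mem_id {n : ℕ} (d y : Fin n → ℝ) : y ∈ Mset d y := by
  refine ⟨1, ⟨?_, ?_, ?_⟩, ?_⟩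
  · intro i j
    rw [Matrix.one_apply]
    split_ifs <;> norm_num
  · intro j
    simp [Matrix.one_apply]
  · simp
  · simp

lemma mem_swap {n : ℕ} (d y : Fin n → ℝ) (hd : ∀ i, 0 < d i) (i j : Fin n) (hij : i ≠ j) :
    y + (min (d i) (d j) * (y j / d j - y i / d i)) •
      ((Pi.single i 1 : Fin n → ℝ) - Pi.single j 1) ∈ Mset d y := by
  have key : ∀ x : Fin n → ℝ,
      ((1 : Matrix (Fin n) (Fin n) ℝ) + Matrix.vecMulVec
        ((Pi.single i 1 : Fin n → ℝ) - Pi.single j 1)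
        (Pi.single j (min (d i) (d j) / d j) - Pi.single i (min (d i) (d j) / d i))).mulVec x
      = x + (min (d i) (d j) * (x j / d j - x i / d i)) •
      ((Pi.single i 1 : Fin n → ℝ) - Pi.single j 1) := by
    intro x
    rw [Matrix.add_mulVec, Matrix.one_mulVec, Matrix.vecMulVec_mulVec, sub_dotProduct,
      single_dotProduct, single_dotProduct]
    ext k
    simp
    ring
  refine ⟨_, ⟨?_, ?_, ?_⟩, key y⟩
  · intro a b
    have h1 := hd i
    have h2 := hd j
    have h3 : 0 < min (d i) (d j) := lt_min h1 h2
    have h4 : min (d i) (d j) / d i ≤ 1 := (div_le_one h1).2 (min_le_left _ _)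
    have h5 : min (d i) (d j) / d j ≤ 1 := (div_le_one h2).2 (min_le_right _ _)
    have h6 : 0 ≤ min (d i) (d j) / d i := by positivity
    have h7 : 0 ≤ min (d i) (d j) / d j := by positivity
    generalize min (d i) (d j) / d i = p at *
    generalize min (d i) (d j) / d j = q at *
    simp only [Matrix.add_apply, Matrix.vecMulVec_apply, Pi.sub_apply, Pi.single_apply,
      Matrix.one_apply]
    split_ifs <;> first | (exfalso; subst_vars; simp_all; done) | linarith
  · intro b
    simp only [Matrix.add_apply, Matrix.vecMulVec_apply, Pi.sub_apply, Finset.sum_add_distrib,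
      ← Finset.sum_mul, Finset.sum_sub_distrib, Finset.sum_pi_single']
    simp [Matrix.one_apply]
  · rw [key d, div_self (hd i).ne', div_self (hd j).ne']
    simp

lemma sum_eq {n : ℕ} (d y x : Fin n → ℝ) (h : x ∈ Mset d y) : ∑ i, x i = ∑ i, y i := by
  obtain ⟨A, ⟨_, h2, _⟩, rfl⟩ := h
  simp only [Matrix.mulVec, dotProduct]
  rw [Finset.sum_comm]
  simp [← Finset.sum_mul, h2]

/-- If M_d(y) is not the singleton {y}, then its affine dimension is n − 1. -/
theorem stmt10 (n : ℕ) (hn : 1 ≤ n) (d : Fin n → ℝ) (hd : ∀ i, 0 < d i)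
    (y : Fin n → ℝ) (hx : ∃ x ∈ Mset d y, x ≠ y) :
    Module.finrank ℝ
      (Submodule.span ℝ
        {w : Fin n → ℝ | ∃ u ∈ Mset d y, ∃ v ∈ Mset d y, w = u - v}) = n - 1 := by
  classical
  obtain ⟨x, ⟨A, hA, hAx⟩, hxy⟩ := hx
  have hcollinear : ∀ i, ∃ k, y k / d k ≠ y i / d i := by
    intro i
    by_contra! hc
    apply hxy
    have hy : y = (y i / d i) • d := by
      ext k
      have := hd k
      simp only [Pi.smul_apply, smul_eq_mul]
      rw [← hc k]
      field_simp
    rw [← hAx, hy, Matrix.mulVec_smul, hA.2.2]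
  set W := Submodule.span ℝ {w : Fin n → ℝ | ∃ u ∈ Mset d y, ∃ v ∈ Mset d y, w = u - v} with hW
  have hne : ∀ i j, y j / d j ≠ y i / d i →
      ((Pi.single i 1 : Fin n → ℝ) - Pi.single j 1) ∈ W := by
    intro i j hr
    have hij : i ≠ j := by rintro rfl; exact hr rfl
    have hc : min (d i) (d j) * (y j / d j - y i / d i) ≠ 0 :=
      mul_ne_zero (lt_min (hd i) (hd j)).ne' (sub_ne_zero.2 hr)
    rw [← Submodule.smul_mem_iff W hc]
    apply Submodule.subset_span
    exact ⟨_, mem_swap d y hd i j hij, y, mem_id d y, by simp⟩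
  have hall : ∀ i j, ((Pi.single i 1 : Fin n → ℝ) - Pi.single j 1) ∈ W := by
    intro i j
    by_cases hr : y j / d j = y i / d i
    · obtain ⟨k, hk⟩ := hcollinear i
      have := W.add_mem (hne i k hk) (hne k j (by rw [hr]; exact hk.symm))
      simpa using this
    · exact hne i j hr
  let f : (Fin n → ℝ) →ₗ[ℝ] ℝ := ∑ i, LinearMap.proj i
  have hf : ∀ w, f w = ∑ i, w i := by intro w; simp [f]
  let i0 : Fin n := ⟨0, hn⟩
  have hWf : W = LinearMap.ker f := by
    apply le_antisymm
    · rw [hW, Submodule.span_le]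
      rintro w ⟨u, hu, v, hv, rfl⟩
      simp [hf, sum_eq d y u hu, sum_eq d y v hv]
    · intro w hw
      rw [LinearMap.mem_ker, hf] at hw
      have : w = ∑ i, w i • ((Pi.single i 1 : Fin n → ℝ) - Pi.single i0 1) := by
        simp only [smul_sub, Finset.sum_sub_distrib, ← Finset.sum_smul, hw, zero_smul, sub_zero]
        exact pi_eq_sum_univ' w
      rw [this]
      exact W.sum_mem fun i _ => W.smul_mem _ (hall i i0)
  have hsurj : LinearMap.range f = ⊤ := by
    rw [LinearMap.range_eq_top]
    intro c
    exact ⟨Pi.single i0 c, by simp [hf]⟩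
  have := LinearMap.finrank_range_add_finrank_ker f
  rw [hsurj, finrank_top, Module.finrank_self, Module.finrank_fin_fun] at this
  rw [hWf]
  omega
end

section
/- Let n ≥ 1, d ∈ ℝ^n with d > 0 entrywise, and y ∈ ℝ^n. Then the cardinality of the image of the extreme point map E_{d,y} satisfies |{ E_{d,y}(σ) : σ ∈ S_n }| ≤ n! + 1 − |Stab(y/d)|, where Stab(y/d) := { σ ∈ S_n : (y_{σ(i)}/d_{σ(i)})_{i=1}^n = (y_i/d_i)_{i=1}^n } is the stabilizer of the vector (y_i/d_i)_{i=1}^n under the permutation action of S_n. -/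
open Finset

lemma th_sorted {n : ℕ} (hn : 1 ≤ n) (d : Fin n → ℝ) (hd : ∀ i, 0 < d i)
    (y : Fin n → ℝ) (π : Equiv.Perm (Fin n))
    (hπ : ∀ a b : Fin n, a ≤ b → y (π b) / d (π b) ≤ y (π a) / d (π a))
    (j : ℕ) (hj : j ≤ n) :
    th d y (psum d π j) =
      ∑ i ∈ Finset.univ.filter (fun i : Fin n => (i : ℕ) < j), y (π i) := by
  have key : ∀ r : ℝ, (∑ i ∈ Finset.univ.filter (fun i : Fin n => (i : ℕ) < j), y (π i))
      = (∑ k : Fin n, if (k : ℕ) < j then y (π k) - r * d (π k) else 0)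
        + r * psum d π j := by
    intro r
    unfold psum
    rw [← Finset.sum_filter, Finset.mul_sum, Finset.sum_sub_distrib]
    ring
  have reidx : ∀ r : ℝ, (∑ k, max (y k - r * d k) 0)
      = ∑ k, max (y (π k) - r * d (π k)) 0 := fun r =>
    (Equiv.sum_comp π (fun k => max (y k - r * d k) 0)).symm
  unfold th
  apply IsLeast.csInf_eq
  constructor
  · have hm : j - 1 < n := by omega
    refine ⟨π ⟨j - 1, hm⟩, hd _, ?_⟩
    simp only
    rw [key (y (π ⟨j - 1, hm⟩) / d (π ⟨j - 1, hm⟩)), reidx]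
    congr 1
    apply Finset.sum_congr rfl
    intro k _
    split_ifs with h
    · apply max_eq_left
      have := hπ k ⟨j - 1, hm⟩ (by rw [Fin.le_def]; simp only; omega)
      rw [le_div_iff₀ (hd (π k))] at this
      linarith
    · apply max_eq_right
      have := hπ ⟨j - 1, hm⟩ k (by rw [Fin.le_def]; simp only; omega)
      rw [div_le_iff₀ (hd (π k))] at this
      linarith
  · rintro _ ⟨i, -, rfl⟩
    simp only
    rw [key (y i / d i), reidx]
    gcongr with k _
    split_ifs
    · exact le_max_left _ _
    · exact le_max_right _ _

lemma Emap_sorted {n : ℕ} (hn : 1 ≤ n) (d : Fin n → ℝ) (hd : ∀ i, 0 < d i)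
    (y : Fin n → ℝ) (π : Equiv.Perm (Fin n))
    (hπ : ∀ a b : Fin n, a ≤ b → y (π b) / d (π b) ≤ y (π a) / d (π a)) :
    Emap d y π = y := by
  funext k
  unfold Emap
  rw [th_sorted hn d hd y π hπ _ (by omega), th_sorted hn d hd y π hπ _ (by omega)]
  have : Finset.univ.filter (fun i : Fin n => (i : ℕ) < (π.symm k : ℕ) + 1)
      = insert (π.symm k) (Finset.univ.filter (fun i : Fin n => (i : ℕ) < (π.symm k : ℕ))) := by
    ext i
    simp only [Finset.mem_filter, Finset.mem_univ, true_and, Finset.mem_insert, Fin.ext_iff]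
    omega
  rw [this, Finset.sum_insert (by simp)]
  simp

/-- Upper bound on the number of extreme points in terms of the stabilizer of
the vector y/d under the permutation action. -/
theorem stmt14 (n : ℕ) (hn : 1 ≤ n) (d : Fin n → ℝ) (hd : ∀ i, 0 < d i)
    (y : Fin n → ℝ) :
    (Set.range (Emap d y)).ncard ≤
      Nat.factorial n + 1 -
        {σ : Equiv.Perm (Fin n) | ∀ i, y (σ i) / d (σ i) = y i / d i}.ncard := by
  obtain ⟨τ, hτ⟩ : ∃ τ : Equiv.Perm (Fin n), ∀ a b : Fin n, a ≤ b →
      y (τ b) / d (τ b) ≤ y (τ a) / d (τ a) := by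
    refine ⟨Tuple.sort (fun i => -(y i / d i)), fun a b hab => ?_⟩
    have := Tuple.monotone_sort (fun i => -(y i / d i)) hab
    simp only [Function.comp] at this
    linarith
  set S := {σ : Equiv.Perm (Fin n) | ∀ i, y (σ i) / d (σ i) = y i / d i} with hS
  set T := (fun σ => σ * τ) '' S with hT
  have hTc : T.ncard = S.ncard := Set.ncard_image_of_injective _ (mul_left_injective τ)
  have hE : ∀ π ∈ T, Emap d y π = y := by
    rintro _ ⟨σ, hσ, rfl⟩
    apply Emap_sorted hn d hd
    intro a b hab
    simp only [Equiv.Perm.mul_apply]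
    rw [hσ, hσ]
    exact hτ a b hab
  have hsub : Set.range (Emap d y) ⊆ insert y (Emap d y '' Tᶜ) := by
    rintro _ ⟨π, rfl⟩
    by_cases h : π ∈ T
    · exact Or.inl (hE π h)
    · exact Or.inr ⟨π, h, rfl⟩
  have h1 := Set.ncard_le_ncard hsub (Set.toFinite _)
  have h2 := Set.ncard_insert_le y (Emap d y '' Tᶜ)
  have h3 := Set.ncard_image_le (f := Emap d y) (Set.toFinite Tᶜ)
  have h4 := Set.ncard_add_ncard_compl T
  rw [Nat.card_perm, Nat.card_fin] at h4
  omega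
end

section
/- Let n ≥ 1, let x, y, d ∈ ℝ^n with d > 0 entrywise, and let x₊, x₋, y₊, y₋ ≥ 0 be real numbers. If ∑_i x_i + x₊ − x₋ = ∑_i y_i + y₊ − y₋ and ‖d_i·x − y_i·d‖₁ + d_i·(x₊ + x₋) ≤ ‖d_i·y − y_i·d‖₁ + d_i·(y₊ + y₋) for all i = 1,…,n, then x₋ ≤ y₋ and x₊ ≤ y₊. Here ‖·‖₁ is the vector 1-norm. -/
open Finset

/-- Lemma on 1-norm inequalities with correction terms (Lemma A.1). -/
theorem stmt15 (n : ℕ) (hn : 1 ≤ n) (x y d : Fin n → ℝ) (hd : ∀ i, 0 < d i)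
    (xp xm yp ym : ℝ) (hxp : 0 ≤ xp) (hxm : 0 ≤ xm) (hyp : 0 ≤ yp) (hym : 0 ≤ ym)
    (hsum : (∑ i, x i) + xp - xm = (∑ i, y i) + yp - ym)
    (hineq : ∀ i, (∑ j, |d i * x j - y i * d j|) + d i * (xp + xm) ≤
      (∑ j, |d i * y j - y i * d j|) + d i * (yp + ym)) :
    xm ≤ ym ∧ xp ≤ yp := by
  have hne : (Finset.univ : Finset (Fin n)).Nonempty := ⟨⟨0, hn⟩, Finset.mem_univ _⟩
  constructor
  · obtain ⟨i, -, hi⟩ := Finset.exists_min_image Finset.univ (fun j => y j / d j) hne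
    have h1 : ∑ j, |d i * y j - y i * d j| = ∑ j, (d i * y j - y i * d j) := by
      refine Finset.sum_congr rfl fun j _ => abs_of_nonneg ?_
      have := (div_le_div_iff₀ (hd i) (hd j)).1 (hi j (Finset.mem_univ j))
      linarith
    have h2 : ∑ j, (d i * x j - y i * d j) ≤ ∑ j, |d i * x j - y i * d j| :=
      Finset.sum_le_sum fun j _ => le_abs_self _
    have h3 := hineq i
    rw [h1] at h3
    rw [Finset.sum_sub_distrib, ← Finset.mul_sum] at h2 h3
    have h4 : d i * (∑ j, x j + (xp + xm)) ≤ d i * (∑ j, y j + (yp + ym)) := by linarith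
    have h5 := le_of_mul_le_mul_left h4 (hd i)
    linarith
  · obtain ⟨i, -, hi⟩ := Finset.exists_max_image Finset.univ (fun j => y j / d j) hne
    have h1 : ∑ j, |d i * y j - y i * d j| = ∑ j, (y i * d j - d i * y j) := by
      refine Finset.sum_congr rfl fun j _ => ?_
      have := (div_le_div_iff₀ (hd j) (hd i)).1 (hi j (Finset.mem_univ j))
      rw [abs_of_nonpos (by linarith)]
      ring
    have h2 : ∑ j, (y i * d j - d i * x j) ≤ ∑ j, |d i * x j - y i * d j| :=
      Finset.sum_le_sum fun j _ => by
        rw [abs_sub_comm]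
        exact le_abs_self _
    have h3 := hineq i
    rw [h1] at h3
    rw [Finset.sum_sub_distrib, ← Finset.mul_sum, ← Finset.mul_sum] at h2 h3
    have h4 : d i * (-∑ j, x j + (xp + xm)) ≤ d i * (-∑ j, y j + (yp + ym)) := by linarith
    have h5 := le_of_mul_le_mul_left h4 (hd i)
    linarith
end

section
/- Let n ≥ 1 and x, y ∈ ℝ^n, and let e₁ ∈ ℝ^n denote the first standard basis vector. The following are equivalent: (i) there exists a matrix A ∈ ℝ^{n×n} with nonnegative entries, every column summing to 1, A·e₁ = e₁, and A·y = x; (ii) ∑_i x_i = ∑_i y_i and ‖x − t·e₁‖₁ ≤ ‖y − t·e₁‖₁ for all t ∈ ℝ; (iii) ∑_i x_i = ∑_i y_i and ‖x − y₁·e₁‖₁ ≤ ‖y − y₁·e₁‖₁. (This characterizes thermomajorization in the zero-temperature limit with non-degenerate ground energy.) -/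
open Finset

/-- The first standard basis vector of ℝ^n. -/
def e1 (n : ℕ) (hn : 0 < n) : Fin n → ℝ := fun j => if j = ⟨0, hn⟩ then 1 else 0


lemma aux_fwd (n : ℕ) (e x y : Fin n → ℝ) (A : Matrix (Fin n) (Fin n) ℝ)
    (h0 : ∀ i j, 0 ≤ A i j) (h1 : ∀ j, ∑ i, A i j = 1)
    (he : A.mulVec e = e) (hx : A.mulVec y = x) :
    (∑ i, x i = ∑ i, y i) ∧
        ∀ t : ℝ, ∑ i, |x i - t * e i| ≤ ∑ i, |y i - t * e i| := by
  have hx' : ∀ i, x i = ∑ j, A i j * y j := fun i => by rw [← hx]; rfl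
  have he' : ∀ i, e i = ∑ j, A i j * e j := fun i => by
    conv_lhs => rw [← he]
    rfl
  constructor
  · simp_rw [hx']
    rw [Finset.sum_comm]
    refine Finset.sum_congr rfl fun j _ => ?_
    rw [← Finset.sum_mul, h1, one_mul]
  · intro t
    calc ∑ i, |x i - t * e i| ≤ ∑ i, ∑ j, A i j * |y j - t * e j| := by
          refine Finset.sum_le_sum fun i _ => ?_
          have : x i - t * e i = ∑ j, A i j * (y j - t * e j) := by
            rw [hx' i, he' i, Finset.mul_sum, ← Finset.sum_sub_distrib]
            exact Finset.sum_congr rfl fun j _ => by ring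
          rw [this]
          refine (Finset.abs_sum_le_sum_abs _ _).trans (Finset.sum_le_sum fun j _ => ?_)
          rw [abs_mul, abs_of_nonneg (h0 i j)]
      _ = ∑ i, |y i - t * e i| := by
          rw [Finset.sum_comm]
          refine Finset.sum_congr rfl fun j _ => ?_
          rw [← Finset.sum_mul, h1, one_mul]

/-- If a nonnegative vector sums to `P` then normalising and rescaling gives it back. -/
lemma aux_norm (n : ℕ) (p : Fin n → ℝ) (P : ℝ) (hp : ∀ i, 0 ≤ p i) (hs : ∑ i, p i = P) (i : Fin n) :
    P * (p i / P) = p i := by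
  by_cases hP : P = 0
  · rw [hP] at hs
    have := (Finset.sum_eq_zero_iff_of_nonneg (fun i _ => hp i)).1 hs i (Finset.mem_univ i)
    simp [hP, this]
  · field_simp

lemma aux_bwd (n : ℕ) (z : Fin n) (e u v : Fin n → ℝ) (he0 : ∀ i, 0 ≤ e i) (hes : ∑ i, e i = 1)
    (hv : v z = 0) (hs : ∑ i, u i = ∑ i, v i) (ha : ∑ i, |u i| ≤ ∑ i, |v i|) :
    ∃ A : Matrix (Fin n) (Fin n) ℝ, (∀ i j, 0 ≤ A i j) ∧
        (∀ j, ∑ i, A i j = 1) ∧ (∀ i, A i z = e i) ∧ A.mulVec v = u := by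
  obtain ⟨d, hd⟩ : ∃ d, d = (∑ i, |v i| - ∑ i, |u i|) / 2 := ⟨_, rfl⟩
  have hd0 : 0 ≤ d := by rw [hd]; linarith
  obtain ⟨p, hp⟩ : ∃ p : Fin n → ℝ, p = fun i => (|u i| + u i) / 2 + d * e i := ⟨_, rfl⟩
  obtain ⟨q, hq⟩ : ∃ q : Fin n → ℝ, q = fun i => (|u i| - u i) / 2 + d * e i := ⟨_, rfl⟩
  obtain ⟨P, hP⟩ : ∃ P : ℝ, P = ∑ j, (|v j| + v j) / 2 := ⟨_, rfl⟩
  obtain ⟨N, hN⟩ : ∃ N : ℝ, N = ∑ j, (|v j| - v j) / 2 := ⟨_, rfl⟩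
  have hp0 : ∀ i, 0 ≤ p i := fun i => by
    have := mul_nonneg hd0 (he0 i)
    have := neg_abs_le (u i)
    simp only [hp]; linarith
  have hq0 : ∀ i, 0 ≤ q i := fun i => by
    have := mul_nonneg hd0 (he0 i)
    have := le_abs_self (u i)
    simp only [hq]; linarith
  have hps : ∑ i, p i = P := by
    simp only [hp, hP, Finset.sum_add_distrib, ← Finset.sum_div, ← Finset.mul_sum, hes]
    rw [hd, hs]; ring
  have hqs : ∑ i, q i = N := by
    simp only [hq, hN, Finset.sum_add_distrib, Finset.sum_sub_distrib, ← Finset.sum_div,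
      ← Finset.mul_sum, hes]
    rw [hd, hs]; ring
  have hP0 : 0 ≤ P := hps ▸ Finset.sum_nonneg fun i _ => hp0 i
  have hN0 : 0 ≤ N := hqs ▸ Finset.sum_nonneg fun i _ => hq0 i
  have hPpos : ∀ j, 0 < v j → 0 < P := fun j hj => by
    rw [hP]
    refine Finset.sum_pos' (fun i _ => ?_) ⟨j, Finset.mem_univ j, ?_⟩
    · have := neg_abs_le (v i)
      linarith
    · have := abs_nonneg (v j)
      linarith
  have hNpos : ∀ j, v j < 0 → 0 < N := fun j hj => by
    rw [hN]
    refine Finset.sum_pos' (fun i _ => ?_) ⟨j, Finset.mem_univ j, ?_⟩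
    · have := le_abs_self (v i)
      linarith
    · have := abs_nonneg (v j)
      linarith
  refine ⟨fun i j => if 0 < v j then p i / P else if v j < 0 then q i / N else e i,
    fun i j => ?_, fun j => ?_, fun i => ?_, ?_⟩
  · beta_reduce
    split_ifs
    · exact div_nonneg (hp0 i) hP0
    · exact div_nonneg (hq0 i) hN0
    · exact he0 i
  · beta_reduce
    split_ifs with h1 h2
    · rw [← Finset.sum_div, hps, div_self (hPpos j h1).ne']
    · rw [← Finset.sum_div, hqs, div_self (hNpos j h2).ne']
    · exact hes
  · simp [hv]
  · funext i
    have key : ∀ j, (if 0 < v j then p i / P else if v j < 0 then q i / N else e i) * v j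
        = (|v j| + v j) / 2 * (p i / P) - (|v j| - v j) / 2 * (q i / N) := fun j => by
      split_ifs with h1 h2
      · rw [abs_of_pos h1]; ring
      · rw [abs_of_neg h2]; ring
      · have : v j = 0 := le_antisymm (not_lt.1 h1) (not_lt.1 h2)
        simp [this]
    change ∑ j, (if 0 < v j then p i / P else if v j < 0 then q i / N else e i) * v j = u i
    rw [Finset.sum_congr rfl fun j _ => key j, Finset.sum_sub_distrib, ← Finset.sum_mul,
      ← Finset.sum_mul, ← hP, ← hN, aux_norm n p P hp0 hps, aux_norm n q N hq0 hqs, hp, hq]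
    ring

/-- Characterization of thermomajorization in the zero-temperature limit with
non-degenerate ground energy. -/
theorem stmt16 (n : ℕ) (hn : 0 < n) (x y : Fin n → ℝ) :
    ((∃ A : Matrix (Fin n) (Fin n) ℝ, (∀ i j, 0 ≤ A i j) ∧
        (∀ j, ∑ i, A i j = 1) ∧ A.mulVec (e1 n hn) = e1 n hn ∧ A.mulVec y = x) ↔
      (∑ i, x i = ∑ i, y i) ∧
        ∀ t : ℝ, ∑ i, |x i - t * e1 n hn i| ≤ ∑ i, |y i - t * e1 n hn i|) ∧
    (((∑ i, x i = ∑ i, y i) ∧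
        ∀ t : ℝ, ∑ i, |x i - t * e1 n hn i| ≤ ∑ i, |y i - t * e1 n hn i|) ↔
      (∑ i, x i = ∑ i, y i) ∧
        ∑ i, |x i - y ⟨0, hn⟩ * e1 n hn i| ≤ ∑ i, |y i - y ⟨0, hn⟩ * e1 n hn i|) := by
  have h31 : ((∑ i, x i = ∑ i, y i) ∧
        ∑ i, |x i - y ⟨0, hn⟩ * e1 n hn i| ≤ ∑ i, |y i - y ⟨0, hn⟩ * e1 n hn i|) →
      (∃ A : Matrix (Fin n) (Fin n) ℝ, (∀ i j, 0 ≤ A i j) ∧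
        (∀ j, ∑ i, A i j = 1) ∧ A.mulVec (e1 n hn) = e1 n hn ∧ A.mulVec y = x) := by
    rintro ⟨hs, ha⟩
    obtain ⟨A, h0, h1, hz, hA⟩ := aux_bwd n ⟨0, hn⟩ (e1 n hn)
      (fun i => x i - y ⟨0, hn⟩ * e1 n hn i) (fun i => y i - y ⟨0, hn⟩ * e1 n hn i)
      (fun i => by unfold e1; split_ifs <;> norm_num) (by simp [e1]) (by simp [e1])
      (by simp only [Finset.sum_sub_distrib, hs]) ha
    have hAe : A.mulVec (e1 n hn) = e1 n hn := by
      funext i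
      rw [← hz i]
      simp [Matrix.mulVec, dotProduct, e1]
    refine ⟨A, h0, h1, hAe, ?_⟩
    have e : y = (fun i => y i - y ⟨0, hn⟩ * e1 n hn i) + y ⟨0, hn⟩ • e1 n hn := by
      funext i; simp
    conv_lhs => rw [e]
    rw [Matrix.mulVec_add, Matrix.mulVec_smul, hA, hAe]
    funext i; simp
  have h12 : (∃ A : Matrix (Fin n) (Fin n) ℝ, (∀ i j, 0 ≤ A i j) ∧
        (∀ j, ∑ i, A i j = 1) ∧ A.mulVec (e1 n hn) = e1 n hn ∧ A.mulVec y = x) →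
      (∑ i, x i = ∑ i, y i) ∧
        ∀ t : ℝ, ∑ i, |x i - t * e1 n hn i| ≤ ∑ i, |y i - t * e1 n hn i| := by
    rintro ⟨A, h0, h1, he, hx⟩
    exact aux_fwd n _ x y A h0 h1 he hx
  exact ⟨⟨h12, fun h => h31 ⟨h.1, h.2 _⟩⟩, ⟨fun h => ⟨h.1, h.2 _⟩, fun h => h12 (h31 h)⟩⟩
end

section
/- Let n ≥ 1, d ∈ ℝ^n with d > 0 entrywise, y ∈ ℝ^n, and σ ∈ S_n. Then th_{d,y}(∑_{i=1}^{j} d_{σ(i)}) = ∑_{i=1}^{j} y_{σ(i)} holds for all j = 1,…,n−1 if and only if y_{σ(1)}/d_{σ(1)} ≥ y_{σ(2)}/d_{σ(2)} ≥ … ≥ y_{σ(n)}/d_{σ(n)}. -/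
open Finset

theorem gap17 {n : ℕ} (d y : Fin n → ℝ) (σ : Equiv.Perm (Fin n)) (l : ℝ) (j : ℕ) :
    (∑ k, max (y k - l * d k) 0) + l * psum d σ j =
      (∑ i ∈ Finset.univ.filter (fun i : Fin n => (i : ℕ) < j), y (σ i)) +
      ∑ k : Fin n, (max (y (σ k) - l * d (σ k)) 0 -
        if (k : ℕ) < j then y (σ k) - l * d (σ k) else 0) := by
  rw [← Equiv.sum_comp σ (fun k => max (y k - l * d k) 0), Finset.sum_sub_distrib,
    ← Finset.sum_filter, Finset.sum_sub_distrib, psum, Finset.mul_sum]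
  ring

theorem term17 (v : ℝ) (p : Prop) [Decidable p] : 0 ≤ max v 0 - if p then v else 0 := by
  split_ifs
  · linarith [le_max_left v 0]
  · linarith [le_max_right v 0]

/-- th_{d,y}(∑_{i≤j} d_{σ(i)}) = ∑_{i≤j} y_{σ(i)} for all j iff σ sorts y/d
non-increasingly. -/
theorem stmt17 (n : ℕ) (hn : 1 ≤ n) (d y : Fin n → ℝ) (hd : ∀ i, 0 < d i)
    (σ : Equiv.Perm (Fin n)) :
    (∀ j : ℕ, 1 ≤ j → j ≤ n - 1 →
        th d y (psum d σ j) =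
          ∑ i ∈ Finset.univ.filter (fun i : Fin n => (i : ℕ) < j), y (σ i)) ↔
      Antitone (fun j : Fin n => y (σ j) / d (σ j)) := by
  have hle : ∀ (i : Fin n) (j : ℕ),
      (∑ i ∈ Finset.univ.filter (fun i : Fin n => (i : ℕ) < j), y (σ i)) ≤
      (∑ k, max (y k - y i / d i * d k) 0) + y i / d i * psum d σ j := by
    intro i j
    rw [gap17]
    have := Finset.sum_nonneg (s := Finset.univ) (fun (k : Fin n) _ =>
      term17 (y (σ k) - y i / d i * d (σ k)) ((k : ℕ) < j))
    linarith
  constructor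
  · intro h a b hab
    rcases hab.eq_or_lt with rfl | hab
    · exact le_rfl
    have hab' : (a : ℕ) < b := hab
    have hb := b.isLt
    have hj := h b (by omega) (by omega)
    have hmem : th d y (psum d σ b) ∈
        ((fun i => (∑ j, max (y j - y i / d i * d j) 0) + y i / d i * psum d σ b) ''
          {i : Fin n | 0 < d i}) :=
      Set.Nonempty.csInf_mem ⟨_, a, hd a, rfl⟩ (Set.toFinite _)
    obtain ⟨i, -, hi⟩ := hmem
    simp only at hi
    rw [hj, gap17] at hi
    have h0 : ∑ k : Fin n, (max (y (σ k) - y i / d i * d (σ k)) 0 -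
        if (k : ℕ) < b then y (σ k) - y i / d i * d (σ k) else 0) = 0 := by linarith
    rw [Finset.sum_eq_zero_iff_of_nonneg (fun k _ => term17 _ _)] at h0
    have ha0 := h0 a (Finset.mem_univ _)
    have hb0 := h0 b (Finset.mem_univ _)
    rw [if_pos hab'] at ha0
    rw [if_neg (lt_irrefl _)] at hb0
    have h1 := le_max_right (y (σ a) - y i / d i * d (σ a)) 0
    have h2 := le_max_left (y (σ b) - y i / d i * d (σ b)) 0
    have h3 : y i / d i ≤ y (σ a) / d (σ a) := by
      rw [le_div_iff₀ (hd _)]; linarith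
    have h4 : y (σ b) / d (σ b) ≤ y i / d i := by
      rw [div_le_iff₀ (hd _)]; linarith
    exact h4.trans h3
  · intro h j h1 h2
    let m : Fin n := ⟨j - 1, by omega⟩
    apply le_antisymm
    · have hb : th d y (psum d σ j) ≤ (∑ k, max (y k - y (σ m) / d (σ m) * d k) 0) +
          y (σ m) / d (σ m) * psum d σ j :=
        csInf_le (Set.toFinite _).bddBelow ⟨σ m, hd _, rfl⟩
      refine hb.trans ?_
      rw [gap17]
      refine (add_eq_left.2 (Finset.sum_eq_zero ?_)).le
      intro k _
      split_ifs with hk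
      · have := h (show k ≤ m from Fin.mk_le_mk.2 (by omega))
        simp only at this
        rw [le_div_iff₀ (hd _)] at this
        rw [max_eq_left (by linarith), sub_self]
      · have := h (show m ≤ k from Fin.mk_le_mk.2 (by omega))
        simp only at this
        rw [div_le_iff₀ (hd (σ k))] at this
        rw [max_eq_right (by linarith), sub_self]
    · refine le_csInf ⟨_, m, hd m, rfl⟩ ?_
      rintro _ ⟨i, -, rfl⟩
      exact hle i j
end
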